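/- Let t ≥ 5, let A = F_2[w_2,w_3]/I_{2^t,3} and B = F_2[w_2,w_3,w_4]/I_{2^t-2,4}, and let ψ: A → B be the F_2-algebra homomorphism induced by the inclusion F_2[w_2,w_3] ⊆ F_2[w_2,w_3,w_4] (well defined since I_{2^t,3} ⊆ I_{2^t-2,4}). If z is a nonzero element of the tensor product A ⊗_{F_2} A, then (ψ⊗ψ)(z) · Σ_{d=2}^{2^{t-2}-3} (w_4^d ⊗ w_4^{2^{t-2}-1-d}) ≠ 0 in B ⊗_{F_2} B (here w_4^e denotes the image of w_4^e in B). -/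

import Mathlib

open MvPolynomial

/-- The polynomials `g_r = g_r^{(4)}` in `F_2[w_2,w_3,w_4]` (variables `X 0 = w_2`,
`X 1 = w_3`, `X 2 = w_4`): `g_0 = 1`, `g_r = 0` for `r < 0`, and
`g_r = w_2·g_{r-2} + w_3·g_{r-3} + w_4·g_{r-4}` for `r ≥ 1`. -/
noncomputable def g4 : ℤ → MvPolynomial (Fin 3) (ZMod 2)
  | r =>
    if r ≤ 0 then (if r = 0 then 1 else 0)
    else X 0 * g4 (r - 2) + X 1 * g4 (r - 3) + X 2 * g4 (r - 4)
  termination_by r => r.toNat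
  decreasing_by all_goals omega

/-- The ideal `I_{n,4} = (g_{n-3}, g_{n-2}, g_{n-1}, g_n)` of `F_2[w_2,w_3,w_4]`. -/
noncomputable def I4 (n : ℤ) : Ideal (MvPolynomial (Fin 3) (ZMod 2)) :=
  Ideal.span {g4 (n - 3), g4 (n - 2), g4 (n - 1), g4 n}

/-- The polynomials `g_r^{(3)}` in `F_2[w_2,w_3]` (variables `X 0 = w_2`, `X 1 = w_3`):
`g^{(3)}_0 = 1`, `g^{(3)}_r = 0` for `r < 0`, and
`g^{(3)}_r = w_2·g^{(3)}_{r-2} + w_3·g^{(3)}_{r-3}` for `r ≥ 1`. -/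
noncomputable def g3 : ℤ → MvPolynomial (Fin 2) (ZMod 2)
  | r =>
    if r ≤ 0 then (if r = 0 then 1 else 0)
    else X 0 * g3 (r - 2) + X 1 * g3 (r - 3)
  termination_by r => r.toNat
  decreasing_by all_goals omega

/-- The ideal `I_{n,3} = (g^{(3)}_{n-2}, g^{(3)}_{n-1}, g^{(3)}_n)` of `F_2[w_2,w_3]`. -/
noncomputable def I3 (n : ℤ) : Ideal (MvPolynomial (Fin 2) (ZMod 2)) :=
  Ideal.span {g3 (n - 2), g3 (n - 1), g3 n}

/-- The natural inclusion `F_2[w_2,w_3] ⊆ F_2[w_2,w_3,w_4]`. -/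
noncomputable def incl : MvPolynomial (Fin 2) (ZMod 2) →+* MvPolynomial (Fin 3) (ZMod 2) :=
  (rename (Fin.castSucc : Fin 2 → Fin 3)).toRingHom

/-!
Let `N = 2 ^ t` and `H = 2 ^ (t - 2)`. In characteristic two the generating series
`G = ∑ g_r x ^ r` of the polynomials `g_r` satisfies
`G = (1 + w₂ x ^ 2 + w₃ x ^ 3 + w₄ x ^ 4) G ^ 2`, which expresses `g_{2m}` and `g_{2m+1}` through
squares of earlier terms. Hence `g_{N-3} = 0`, the polynomials `g_{N-2}` and `g_{N-1}` do not
involve `w₄` and so vanish in `A`, and `β := g_{N-4}` is monic of degree `H - 1` in `w₄`.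
The recurrence for `g_{N-1}` then gives `w₄ g_{N-5} = -w₃ β` in `A[w₄]`, so multiplication by `w₄`
induces a linear map `B → A[w₄]/(β)`. Reading off a coefficient of the remainder modulo `β` recovers
`a` from `ψ(a) w₄ ^ d` for every prescribed `d < H - 2` and annihilates the other such powers of
`w₄`. The tensor product of two of these functionals picks out one summand and is a left inverse of
the map `z ↦ (ψ ⊗ ψ)(z) · ∑ w₄ ^ d ⊗ w₄ ^ (H - 1 - d)`.
-/

section LinearAlgebra

open TensorProduct

theorem map_map_mul_sum_tmul {R A₁ A₂ B₁ B₂ ι : Type*} [CommSemiring R]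
    [Semiring A₁] [Algebra R A₁] [Semiring A₂] [Algebra R A₂]
    [Semiring B₁] [Algebra R B₁] [Semiring B₂] [Algebra R B₂] [DecidableEq ι]
    {ψ₁ : A₁ →ₐ[R] B₁} {ψ₂ : A₂ →ₐ[R] B₂} {φ₁ : B₁ →ₗ[R] A₁} {φ₂ : B₂ →ₗ[R] A₂}
    {s : Finset ι} {i₀ : ι} (hi₀ : i₀ ∈ s) {u : ι → B₁} {v : ι → B₂}
    (hφ₁ : ∀ i ∈ s, ∀ a, φ₁ (ψ₁ a * u i) = if i = i₀ then a else 0)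
    (hφ₂ : ∀ a, φ₂ (ψ₂ a * v i₀) = a) (z : A₁ ⊗[R] A₂) :
    TensorProduct.map φ₁ φ₂
      (Algebra.TensorProduct.map ψ₁ ψ₂ z * ∑ i ∈ s, u i ⊗ₜ[R] v i) = z := by
  induction z with
  | zero => simp
  | add x y hx hy => rw [map_add, add_mul, map_add, hx, hy]
  | tmul a b =>
    rw [Algebra.TensorProduct.map_tmul, Finset.mul_sum, map_sum, Finset.sum_eq_single_of_mem i₀ hi₀]
    · rw [Algebra.TensorProduct.tmul_mul_tmul, TensorProduct.map_tmul, hφ₁ i₀ hi₀, if_pos rfl, hφ₂]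
    · intro i hi hne
      rw [Algebra.TensorProduct.tmul_mul_tmul, TensorProduct.map_tmul, hφ₁ i hi, if_neg hne,
        zero_tmul]

theorem exists_linearMap_mk_eq_coeff_modByMonic {R Q A : Type*} [CommRing R] [CommRing Q]
    [Algebra R Q] [CommRing A] [Algebra R A] (Θ : Q →ₐ[R] Polynomial A) (u : Polynomial A)
    {J : Ideal Q} {β : Polynomial A} (hβ : β.Monic) (hJ : ∀ p ∈ J, β ∣ u * Θ p) (k : ℕ) :
    ∃ φ : (Q ⧸ J) →ₗ[R] A, ∀ p, φ (Ideal.Quotient.mk J p) = ((u * Θ p) %ₘ β).coeff k := by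
  let remainderCoeff : Q →ₗ[R] A :=
    ((Polynomial.lcoeff A k ∘ₗ Polynomial.modByMonicHom β).restrictScalars R) ∘ₗ
      LinearMap.mulLeft R u ∘ₗ Θ.toLinearMap
  have hker : J.restrictScalars R ≤ LinearMap.ker remainderCoeff := fun p hp ↦ by
    change ((u * Θ p) %ₘ β).coeff k = 0
    rw [(Polynomial.modByMonic_eq_zero_iff_dvd hβ).2 (hJ p hp), Polynomial.coeff_zero]
  exact ⟨(J.restrictScalars R).liftQ remainderCoeff hker ∘ₗ
    (Submodule.Quotient.restrictScalarsEquiv R J).symm.toLinearMap, fun _ ↦ rfl⟩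

end LinearAlgebra

section ExtendLast

variable {R A : Type*} [CommSemiring R] [CommSemiring A] [Algebra R A] {n : ℕ}

/-- The extension of an algebra homomorphism `f : R[x_0, …, x_{n-1}] → A` to
`R[x_0, …, x_n] → A[X]` that sends the last variable to `X`. -/
noncomputable def extendLast (f : MvPolynomial (Fin n) R →ₐ[R] A) :
    MvPolynomial (Fin (n + 1)) R →ₐ[R] Polynomial A :=
  aeval (Fin.snoc (fun i ↦ Polynomial.C (f (X i))) Polynomial.X : Fin (n + 1) → Polynomial A)

theorem extendLast_X_last (f : MvPolynomial (Fin n) R →ₐ[R] A) :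
    extendLast f (X (Fin.last n)) = Polynomial.X := by
  simp [extendLast]

theorem extendLast_rename_castSucc (f : MvPolynomial (Fin n) R →ₐ[R] A)
    (p : MvPolynomial (Fin n) R) :
    extendLast f (rename Fin.castSucc p) = Polynomial.C (f p) := by
  have h : (extendLast f).comp (rename Fin.castSucc) = Polynomial.CAlgHom.comp f := by
    ext i : 1
    simp [extendLast]
  exact DFunLike.congr_fun h p

end ExtendLast

section Recurrence

theorem g4_of_neg {r : ℤ} (h : r < 0) : g4 r = 0 := by
  rw [g4, if_pos h.le, if_neg h.ne]

theorem g4_zero : g4 0 = 1 := by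
  rw [g4, if_pos le_rfl, if_pos rfl]

theorem g4_of_pos {r : ℤ} (h : 0 < r) :
    g4 r = X 0 * g4 (r - 2) + X 1 * g4 (r - 3) + X 2 * g4 (r - 4) := by
  rw [g4, if_neg h.not_ge]

theorem g3_of_neg {r : ℤ} (h : r < 0) : g3 r = 0 := by
  rw [g3, if_pos h.le, if_neg h.ne]

theorem g3_zero : g3 0 = 1 := by
  rw [g3, if_pos le_rfl, if_pos rfl]

theorem g3_of_pos {r : ℤ} (h : 0 < r) : g3 r = X 0 * g3 (r - 2) + X 1 * g3 (r - 3) := by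
  rw [g3, if_neg h.not_ge]

theorem aeval_g4_eq_g3 (r : ℤ) : aeval ![X 0, X 1, 0] (g4 r) = g3 r := by
  rcases lt_trichotomy r 0 with hr | rfl | hr
  · rw [g4_of_neg hr, g3_of_neg hr, map_zero]
  · rw [g4_zero, g3_zero, map_one]
  · rw [g4_of_pos hr, g3_of_pos hr, ← aeval_g4_eq_g3 (r - 2), ← aeval_g4_eq_g3 (r - 3)]
    simp
termination_by r.toNat
decreasing_by all_goals omega

theorem aeval_incl (p : MvPolynomial (Fin 2) (ZMod 2)) :
    aeval ![X 0, X 1, (0 : MvPolynomial (Fin 2) (ZMod 2))] (incl p) = p := by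
  have h : (![X 0, X 1, 0] ∘ Fin.castSucc : Fin 2 → MvPolynomial (Fin 2) (ZMod 2)) = X := by
    ext1 i
    fin_cases i <;> rfl
  change aeval _ (rename Fin.castSucc p) = p
  rw [aeval_rename, h, aeval_X_left_apply]

theorem g4_eq_incl_g3 {r : ℤ} (hr : g4 r ∈ incl.range) : g4 r = incl (g3 r) := by
  obtain ⟨p, hp⟩ := hr
  rw [← aeval_g4_eq_g3, ← hp, aeval_incl]

theorem g4_sq_of_pos {m : ℤ} (hm : 0 < m) :
    g4 m ^ 2 = X 0 ^ 2 * g4 (m - 2) ^ 2 + X 1 ^ 2 * g4 (m - 3) ^ 2 + X 2 ^ 2 * g4 (m - 4) ^ 2 := by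
  rw [g4_of_pos hm]
  simp only [CharTwo.add_sq, mul_pow]

theorem g4_two_mul_and_two_mul_add_one (m : ℤ) :
    g4 (2 * m) = g4 m ^ 2 + X 0 * g4 (m - 1) ^ 2 + X 2 * g4 (m - 2) ^ 2 ∧
      g4 (2 * m + 1) = X 1 * g4 (m - 1) ^ 2 := by
  rcases lt_trichotomy m 0 with hm | rfl | hm
  · simp [g4_of_neg (show 2 * m < 0 by omega), g4_of_neg (show 2 * m + 1 < 0 by omega),
      g4_of_neg hm, g4_of_neg (show m - 1 < 0 by omega), g4_of_neg (show m - 2 < 0 by omega)]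
  · simp [g4_of_pos, g4_of_neg, g4_zero]
  · have two_eq_zero : (2 : MvPolynomial (Fin 3) (ZMod 2)) = 0 := CharTwo.two_eq_zero
    obtain ⟨ih_even₁, ih_odd₁⟩ := g4_two_mul_and_two_mul_add_one (m - 1)
    obtain ⟨ih_even₂, ih_odd₂⟩ := g4_two_mul_and_two_mul_add_one (m - 2)
    have even₁ : g4 (2 * m - 2) = g4 (m - 1) ^ 2 + X 0 * g4 (m - 2) ^ 2 + X 2 * g4 (m - 3) ^ 2 := by
      grind
    have odd₁ : g4 (2 * m - 1) = X 1 * g4 (m - 2) ^ 2 := by grind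
    have even₂ : g4 (2 * m - 4) = g4 (m - 2) ^ 2 + X 0 * g4 (m - 3) ^ 2 + X 2 * g4 (m - 4) ^ 2 := by
      grind
    have odd₂ : g4 (2 * m - 3) = X 1 * g4 (m - 3) ^ 2 := by grind
    constructor
    · rw [g4_of_pos (by omega), even₁, odd₂, even₂, g4_sq_of_pos hm]
      linear_combination X 0 * X 2 * g4 (m - 3) ^ 2 * two_eq_zero
    · rw [g4_of_pos (by omega), show 2 * m + 1 - 2 = 2 * m - 1 by ring,
        show 2 * m + 1 - 3 = 2 * m - 2 by ring, show 2 * m + 1 - 4 = 2 * m - 3 by ring,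
        odd₁, even₁, odd₂]
      linear_combination (X 0 * X 1 * g4 (m - 2) ^ 2 + X 1 * X 2 * g4 (m - 3) ^ 2) * two_eq_zero
termination_by m.toNat
decreasing_by all_goals omega

theorem g4_two_mul (m : ℤ) :
    g4 (2 * m) = g4 m ^ 2 + X 0 * g4 (m - 1) ^ 2 + X 2 * g4 (m - 2) ^ 2 :=
  (g4_two_mul_and_two_mul_add_one m).1

theorem g4_two_mul_add_one (m : ℤ) : g4 (2 * m + 1) = X 1 * g4 (m - 1) ^ 2 :=
  (g4_two_mul_and_two_mul_add_one m).2

end Recurrence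

section TwoPow

theorem g4_two_pow_sub_three (s : ℕ) : g4 (2 ^ (s + 2) - 3) = 0 := by
  induction s with
  | zero => simpa [g4_of_neg] using g4_two_mul_add_one 0
  | succ s ih =>
    rw [show (2 : ℤ) ^ (s + 1 + 2) - 3 = 2 * (2 ^ (s + 2) - 2) + 1 by ring, g4_two_mul_add_one,
      show (2 : ℤ) ^ (s + 2) - 2 - 1 = 2 ^ (s + 2) - 3 by ring, ih]
    simp

theorem X_zero_mem_range_incl : X 0 ∈ incl.range := ⟨X 0, rename_X _ _⟩

theorem X_one_mem_range_incl : X 1 ∈ incl.range := ⟨X 1, rename_X _ _⟩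

theorem g4_two_pow_sub_two_and_one_mem_range_incl (s : ℕ) :
    g4 (2 ^ (s + 2) - 2) ∈ incl.range ∧ g4 (2 ^ (s + 2) - 1) ∈ incl.range := by
  induction s with
  | zero =>
    have g4_two : g4 2 = X 0 := by simp [g4_of_pos, g4_zero, g4_of_neg]
    have g4_three : g4 3 = X 1 := by simpa [g4_zero] using g4_two_mul_add_one 1
    norm_num only [g4_two, g4_three]
    exact ⟨X_zero_mem_range_incl, X_one_mem_range_incl⟩
  | succ s ih =>
    obtain ⟨ih₂, ih₁⟩ := ih
    constructor
    · rw [show (2 : ℤ) ^ (s + 1 + 2) - 2 = 2 * (2 ^ (s + 2) - 1) by ring, g4_two_mul,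
        show (2 : ℤ) ^ (s + 2) - 1 - 1 = 2 ^ (s + 2) - 2 by ring,
        show (2 : ℤ) ^ (s + 2) - 1 - 2 = 2 ^ (s + 2) - 3 by ring, g4_two_pow_sub_three,
        zero_pow two_ne_zero, mul_zero, add_zero]
      exact add_mem (pow_mem ih₁ 2) (mul_mem X_zero_mem_range_incl (pow_mem ih₂ 2))
    · rw [show (2 : ℤ) ^ (s + 1 + 2) - 1 = 2 * (2 ^ (s + 2) - 1) + 1 by ring, g4_two_mul_add_one,
        show (2 : ℤ) ^ (s + 2) - 1 - 1 = 2 ^ (s + 2) - 2 by ring]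
      exact mul_mem X_one_mem_range_incl (pow_mem ih₂ 2)

theorem g4_two_pow_sub_two (s : ℕ) : g4 (2 ^ (s + 2) - 2) = incl (g3 (2 ^ (s + 2) - 2)) :=
  g4_eq_incl_g3 (g4_two_pow_sub_two_and_one_mem_range_incl s).1

theorem g4_two_pow_sub_one (s : ℕ) : g4 (2 ^ (s + 2) - 1) = incl (g3 (2 ^ (s + 2) - 1)) :=
  g4_eq_incl_g3 (g4_two_pow_sub_two_and_one_mem_range_incl s).2

end TwoPow

section Functionals

variable {A : Type*} [CommRing A] [Algebra (ZMod 2) A]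

theorem extendLast_incl (f : MvPolynomial (Fin 2) (ZMod 2) →ₐ[ZMod 2] A)
    (p : MvPolynomial (Fin 2) (ZMod 2)) : extendLast f (incl p) = Polynomial.C (f p) :=
  extendLast_rename_castSucc f p

theorem extendLast_X_two (f : MvPolynomial (Fin 2) (ZMod 2) →ₐ[ZMod 2] A) :
    extendLast f (X 2) = Polynomial.X :=
  extendLast_X_last f

theorem isMonicOfDegree_extendLast_g4_two_pow_sub_four [Nontrivial A]
    (f : MvPolynomial (Fin 2) (ZMod 2) →ₐ[ZMod 2] A) (s : ℕ) :
    Polynomial.IsMonicOfDegree (extendLast f (g4 (2 ^ (s + 2) - 4))) (2 ^ s - 1) := by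
  induction s with
  | zero => simp [g4_zero]
  | succ s ih =>
    have hdeg : 1 + (2 ^ s - 1) * 2 = 2 ^ (s + 1) - 1 := by
      have := Nat.one_le_two_pow (n := s)
      omega
    have hg4 : g4 (2 ^ (s + 1 + 2) - 4) =
        X 2 * g4 (2 ^ (s + 2) - 4) ^ 2 + incl (g3 (2 ^ (s + 2) - 2)) ^ 2 := by
      rw [show (2 : ℤ) ^ (s + 1 + 2) - 4 = 2 * (2 ^ (s + 2) - 2) by ring, g4_two_mul,
        show (2 : ℤ) ^ (s + 2) - 2 - 1 = 2 ^ (s + 2) - 3 by ring,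
        show (2 : ℤ) ^ (s + 2) - 2 - 2 = 2 ^ (s + 2) - 4 by ring,
        g4_two_pow_sub_three, g4_two_pow_sub_two]
      ring
    rw [hg4, map_add, map_mul, map_pow, map_pow, extendLast_X_two, extendLast_incl,
      ← Polynomial.C_pow, ← hdeg]
    refine ((Polynomial.isMonicOfDegree_X A).mul (ih.pow 2)).add_right ?_
    rw [Polynomial.natDegree_C]
    omega

variable {f : MvPolynomial (Fin 2) (ZMod 2) →ₐ[ZMod 2] A} {s : ℕ}

theorem X_mul_extendLast_g4_two_pow_sub_five (h : f (g3 (2 ^ (s + 2) - 1)) = 0) :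
    Polynomial.X * extendLast f (g4 (2 ^ (s + 2) - 5)) =
      -extendLast f (X 1) * extendLast f (g4 (2 ^ (s + 2) - 4)) := by
  have hpos : (0 : ℤ) < 2 ^ (s + 2) - 1 := sub_pos.2 (one_lt_pow₀ one_lt_two (by omega))
  have hrec : extendLast f (g4 (2 ^ (s + 2) - 1)) = 0 := by
    rw [g4_two_pow_sub_one, extendLast_incl, h, map_zero]
  rw [g4_of_pos hpos, show (2 : ℤ) ^ (s + 2) - 1 - 2 = 2 ^ (s + 2) - 3 by ring,
    show (2 : ℤ) ^ (s + 2) - 1 - 3 = 2 ^ (s + 2) - 4 by ring,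
    show (2 : ℤ) ^ (s + 2) - 1 - 4 = 2 ^ (s + 2) - 5 by ring, g4_two_pow_sub_three, mul_zero,
    zero_add, map_add, map_mul, map_mul, extendLast_X_two] at hrec
  linear_combination hrec

theorem dvd_X_mul_extendLast_of_mem_I4 (h₂ : f (g3 (2 ^ (s + 2) - 2)) = 0)
    (h₁ : f (g3 (2 ^ (s + 2) - 1)) = 0) {p : MvPolynomial (Fin 3) (ZMod 2)}
    (hp : p ∈ I4 (2 ^ (s + 2) - 2)) :
    extendLast f (g4 (2 ^ (s + 2) - 4)) ∣ Polynomial.X * extendLast f p := by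
  let β := extendLast f (g4 (2 ^ (s + 2) - 4))
  let K : Ideal (MvPolynomial (Fin 3) (ZMod 2)) :=
    ((Ideal.span {β}).colon {Polynomial.X}).comap (extendLast f)
  have mem_K (q) : q ∈ K ↔ β ∣ Polynomial.X * extendLast f q := by
    rw [Ideal.mem_comap, Submodule.mem_colon_singleton, smul_eq_mul, Ideal.mem_span_singleton,
      mul_comm]
  suffices I4 (2 ^ (s + 2) - 2) ≤ K from (mem_K p).1 (this hp)
  refine Ideal.span_le.2 ?_
  rintro q (rfl | rfl | rfl | rfl) <;> refine (mem_K _).2 ?_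
  · rw [show (2 : ℤ) ^ (s + 2) - 2 - 3 = 2 ^ (s + 2) - 5 by ring,
      X_mul_extendLast_g4_two_pow_sub_five h₁]
    exact dvd_mul_left _ _
  · rw [show (2 : ℤ) ^ (s + 2) - 2 - 2 = 2 ^ (s + 2) - 4 by ring]
    exact dvd_mul_left _ _
  · rw [show (2 : ℤ) ^ (s + 2) - 2 - 1 = 2 ^ (s + 2) - 3 by ring, g4_two_pow_sub_three, map_zero,
      mul_zero]
    exact dvd_zero _
  · rw [g4_two_pow_sub_two, extendLast_incl, h₂, map_zero, mul_zero]
    exact dvd_zero _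

theorem exists_linearMap_mk_incl_mul_pow (h₂ : f (g3 (2 ^ (s + 2) - 2)) = 0)
    (h₁ : f (g3 (2 ^ (s + 2) - 1)) = 0) (e : ℕ) :
    ∃ φ : (MvPolynomial (Fin 3) (ZMod 2) ⧸ I4 (2 ^ (s + 2) - 2)) →ₗ[ZMod 2] A,
      ∀ p d, d + 2 < 2 ^ s →
        φ (Ideal.Quotient.mk _ (incl p) * Ideal.Quotient.mk _ (X 2) ^ d) =
          if d = e then f p else 0 := by
  rcases subsingleton_or_nontrivial A with _ | _
  · exact ⟨0, fun _ _ _ ↦ Subsingleton.elim _ _⟩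
  have hβ := isMonicOfDegree_extendLast_g4_two_pow_sub_four f s
  obtain ⟨φ, hφ⟩ := exists_linearMap_mk_eq_coeff_modByMonic (extendLast f) Polynomial.X hβ.monic
    (fun _ ↦ dvd_X_mul_extendLast_of_mem_I4 h₂ h₁) (e + 1)
  refine ⟨φ, fun p d hd ↦ ?_⟩
  have hmul : Polynomial.X * extendLast f (incl p * X 2 ^ d) =
      Polynomial.C (f p) * Polynomial.X ^ (d + 1) := by
    rw [map_mul, map_pow, extendLast_X_two, extendLast_incl]
    ring
  have hdeg : (Polynomial.C (f p) * Polynomial.X ^ (d + 1)).degree <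
      (extendLast f (g4 (2 ^ (s + 2) - 4))).degree := by
    refine (Polynomial.degree_C_mul_X_pow_le _ _).trans_lt ?_
    rw [Polynomial.degree_eq_natDegree hβ.ne_zero, hβ.natDegree_eq]
    exact_mod_cast (show d + 1 < 2 ^ s - 1 by omega)
  rw [← map_pow, ← map_mul, hφ, hmul, (Polynomial.modByMonic_eq_self_iff hβ.monic).2 hdeg,
    Polynomial.coeff_C_mul_X_pow]
  simp only [Nat.add_right_cancel_iff, eq_comm]

end Functionals

theorem exists_linearMap_map_mul_pow {s : ℕ}
    {ψ : (MvPolynomial (Fin 2) (ZMod 2) ⧸ I3 (2 ^ (s + 2))) →ₐ[ZMod 2]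
      (MvPolynomial (Fin 3) (ZMod 2) ⧸ I4 (2 ^ (s + 2) - 2))}
    (hψ : ∀ p, ψ (Ideal.Quotient.mk _ p) = Ideal.Quotient.mk _ (incl p)) (e : ℕ) :
    ∃ φ : (MvPolynomial (Fin 3) (ZMod 2) ⧸ I4 (2 ^ (s + 2) - 2)) →ₗ[ZMod 2]
        (MvPolynomial (Fin 2) (ZMod 2) ⧸ I3 (2 ^ (s + 2))),
      ∀ a d, d + 2 < 2 ^ s →
        φ (ψ a * Ideal.Quotient.mk _ (X 2) ^ d) = if d = e then a else 0 := by
  have hI3 {r : ℤ} (hr : g3 r ∈ I3 (2 ^ (s + 2))) :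
      Ideal.Quotient.mkₐ (ZMod 2) (I3 (2 ^ (s + 2))) (g3 r) = 0 :=
    Ideal.Quotient.eq_zero_iff_mem.2 hr
  obtain ⟨φ, hφ⟩ := exists_linearMap_mk_incl_mul_pow (s := s)
    (hI3 (Ideal.subset_span (by simp))) (hI3 (Ideal.subset_span (by simp))) e
  refine ⟨φ, fun a d hd ↦ ?_⟩
  obtain ⟨p, rfl⟩ := Ideal.Quotient.mk_surjective a
  rw [hψ]
  exact hφ p d hd

open TensorProduct in
/-- Lemma 5.2: let `t ≥ 5`, `A = F_2[w_2,w_3]/I_{2^t,3}`, `B = F_2[w_2,w_3,w_4]/I_{2^t-2,4}`,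
and let `ψ : A → B` be the `F_2`-algebra homomorphism induced by the inclusion
`F_2[w_2,w_3] ⊆ F_2[w_2,w_3,w_4]`. If `z ≠ 0` in `A ⊗ A`, then
`(ψ⊗ψ)(z) · Σ_{d=2}^{2^{t-2}-3} w_4^d ⊗ w_4^{2^{t-2}-1-d} ≠ 0` in `B ⊗ B`. -/
theorem stmt18 (t : ℕ) (ht : 5 ≤ t)
    (ψ : (MvPolynomial (Fin 2) (ZMod 2) ⧸ I3 (2 ^ t)) →ₐ[ZMod 2]
      (MvPolynomial (Fin 3) (ZMod 2) ⧸ I4 (2 ^ t - 2)))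
    (hψ : ∀ p : MvPolynomial (Fin 2) (ZMod 2),
      ψ (Ideal.Quotient.mk (I3 (2 ^ t)) p) = Ideal.Quotient.mk (I4 (2 ^ t - 2)) (incl p))
    (z : (MvPolynomial (Fin 2) (ZMod 2) ⧸ I3 (2 ^ t)) ⊗[ZMod 2]
      (MvPolynomial (Fin 2) (ZMod 2) ⧸ I3 (2 ^ t)))
    (hz : z ≠ 0) :
    Algebra.TensorProduct.map ψ ψ z *
        ∑ d ∈ Finset.Icc 2 (2 ^ (t - 2) - 3),
          ((Ideal.Quotient.mk (I4 (2 ^ t - 2)) (X 2)) ^ d) ⊗ₜ[ZMod 2]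
            ((Ideal.Quotient.mk (I4 (2 ^ t - 2)) (X 2)) ^ (2 ^ (t - 2) - 1 - d))
      ≠ 0 := by
  obtain ⟨s, rfl⟩ := Nat.exists_eq_add_of_le' (show 2 ≤ t by omega)
  rw [Nat.add_sub_cancel]
  have hs : 8 ≤ 2 ^ s := Nat.pow_le_pow_right two_pos (show 3 ≤ s by omega)
  obtain ⟨φ, hφ⟩ := exists_linearMap_map_mul_pow hψ 2
  obtain ⟨χ, hχ⟩ := exists_linearMap_map_mul_pow hψ (2 ^ s - 1 - 2)
  have hmem : 2 ∈ Finset.Icc 2 (2 ^ s - 3) := Finset.mem_Icc.2 (by omega)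
  have hleft := map_map_mul_sum_tmul hmem
    (fun d hd a ↦ hφ a d (by rw [Finset.mem_Icc] at hd; omega))
    (v := fun d ↦ Ideal.Quotient.mk _ (X 2) ^ (2 ^ s - 1 - d))
    (fun a ↦ (hχ a (2 ^ s - 1 - 2) (by omega)).trans (if_pos rfl)) z
  intro hzero
  rw [hzero, map_zero] at hleft
  exact hz hleft.symm
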